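/- Let H0 and H be finite hearts of bounded t-structures on a triangulated category D and let N ≥ 2 be an integer. Then H0[1] ≤ H ≤ H0[N-1] if and only if, for every simple object S of H, the homology H^m(S) with respect to H0 vanishes for all integers m with m ≤ 0 or m ≥ N. -/

import Mathlib

open CategoryTheory Category Limits Pretriangulated ZeroObject

universe v u

namespace Paper

variable (C : Type u) [Category.{v} C] [HasZeroObject C] [HasShift C ℤ]
  [Preadditive C] [∀ n : ℤ, (shiftFunctor C n).Additive] [Pretriangulated C]

/-- The right perpendicular of a set of objects: objects receiving no nonzero
morphism from the set. -/
def perp (P : Set C) : Set C := {G | ∀ F ∈ P, ∀ f : F ⟶ G, f = 0}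

/-- A bounded t-structure on a (pre)triangulated category, given by its aisle `P`. -/
structure TStr where
  P : Set C
  /-- `P` is closed under direct summands (hence under isomorphism). -/
  summand : ∀ (X Y : C) (i : Y ⟶ X) (r : X ⟶ Y), i ≫ r = 𝟙 Y → X ∈ P → Y ∈ P
  /-- `P[1] ⊆ P`. -/
  shift_mem : ∀ X ∈ P, X⟦(1 : ℤ)⟧ ∈ P
  /-- Every object fits in a triangle `F → E → G → F[1]` with `F ∈ P` and `G ∈ P^⊥`. -/
  exists_triangle : ∀ E : C, ∃ (F G : C) (f : F ⟶ E) (g : E ⟶ G) (h : G ⟶ F⟦(1 : ℤ)⟧),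
    F ∈ P ∧ G ∈ perp C P ∧ Triangle.mk f g h ∈ distTriang C
  /-- `M[k] ∈ P` for `k ≫ 0`. -/
  bounded_above : ∀ M : C, ∃ a : ℤ, ∀ j : ℤ, a ≤ j → M⟦j⟧ ∈ P
  /-- `M[k] ∈ P^⊥` for `k ≪ 0`. -/
  bounded_below : ∀ M : C, ∃ b : ℤ, ∀ j : ℤ, j ≤ b → M⟦j⟧ ∈ perp C P

/-- The heart `H = P^⊥[1] ∩ P` of a bounded t-structure. -/
def heart (T : TStr C) : Set C := {X | X ∈ T.P ∧ X⟦(-1 : ℤ)⟧ ∈ perp C T.P}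

/-- The shift `S[m]` of a set of objects. -/
def shiftSet (S : Set C) (m : ℤ) : Set C := {X | X⟦(-m : ℤ)⟧ ∈ S}

/-- An object `P` is a projective of a heart if `Hom(P, M[k]) = 0` for all `k ≠ 0`
and all `M` in the heart. -/
def IsProjOf (T : TStr C) (P : C) : Prop :=
  ∀ (k : ℤ), k ≠ 0 → ∀ M ∈ heart C T, ∀ f : P ⟶ M⟦k⟧, f = 0

/-- A filtration of an object `M` by triangles with factors in the heart, shifted by a
strictly decreasing sequence of degrees: the canonical filtration associated to a bounded
t-structure. -/
structure HeartFiltration (T : TStr C) (M : C) where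
  n : ℕ
  obj : ℕ → C
  deg : ℕ → ℤ
  factor : ℕ → C
  zero : IsZero (obj 0)
  top : obj n ≅ M
  mem : ∀ i, 1 ≤ i → i ≤ n → factor i ∈ heart C T
  strict : ∀ i j, 1 ≤ i → i < j → j ≤ n → deg j < deg i
  tri : ∀ i, 1 ≤ i → i ≤ n →
    ∃ (f : obj (i - 1) ⟶ obj i) (g : obj i ⟶ (factor i)⟦deg i⟧)
      (h : (factor i)⟦deg i⟧ ⟶ (obj (i - 1))⟦(1 : ℤ)⟧),
      Triangle.mk f g h ∈ distTriang C

variable {C}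

open Classical in
/-- The homology `H^k(M)` of `M` with respect to the heart, read off from a
filtration: the factor in degree `k` if there is one, and `0` otherwise. -/
noncomputable def HeartFiltration.homologyAt {T : TStr C} {M : C}
    (F : HeartFiltration C T M) (k : ℤ) : C :=
  if h : ∃ i, 1 ≤ i ∧ i ≤ F.n ∧ F.deg i = k then F.factor h.choose else 0

variable (C)

/-- A torsion pair `⟨F, T⟩` in the heart of a bounded t-structure: `Hom(T, F) = 0` and
every object of the heart is an extension (triangle) of an `F`-object by a `T`-object. -/
structure TorsionPairIn (T : TStr C) where
  free : Set C
  tor : Set C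
  free_sub : free ⊆ heart C T
  tor_sub : tor ⊆ heart C T
  hom_zero : ∀ X ∈ tor, ∀ Y ∈ free, ∀ f : X ⟶ Y, f = 0
  exists_ses : ∀ E ∈ heart C T, ∃ (A B : C) (f : A ⟶ E) (g : E ⟶ B) (h : B ⟶ A⟦(1 : ℤ)⟧),
    A ∈ tor ∧ B ∈ free ∧ Triangle.mk f g h ∈ distTriang C

/-- The forward tilt `H^♯` of the heart at a torsion pair `⟨free, tor⟩`:
objects `E` with `H^1(E) ∈ F`, `H^0(E) ∈ T` and `H^i(E) = 0` otherwise. -/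
def tiltSharpSet (T : TStr C) (free tor : Set C) : Set C :=
  {E | ∀ (F : HeartFiltration C T E) (i : ℕ), 1 ≤ i → i ≤ F.n →
    IsZero (F.factor i) ∨ (F.deg i = 1 ∧ F.factor i ∈ free) ∨
      (F.deg i = 0 ∧ F.factor i ∈ tor)}

/-- The backward tilt `H^♭` of the heart at a torsion pair `⟨free, tor⟩`:
objects `E` with `H^0(E) ∈ F`, `H^{-1}(E) ∈ T` and `H^i(E) = 0` otherwise. -/
def tiltFlatSet (T : TStr C) (free tor : Set C) : Set C :=
  {E | ∀ (F : HeartFiltration C T E) (i : ℕ), 1 ≤ i → i ≤ F.n →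
    IsZero (F.factor i) ∨ (F.deg i = 0 ∧ F.factor i ∈ free) ∨
      (F.deg i = -1 ∧ F.factor i ∈ tor)}

/-- Simple objects of a heart (or of any full subcategory closed under the abelian
structure): nonzero objects which are not the middle term of a nontrivial short exact
sequence (triangle) in the heart. -/
def IsSimpleIn (H : Set C) (X : C) : Prop :=
  X ∈ H ∧ ¬ IsZero X ∧ ∀ (A B : C) (f : A ⟶ X) (g : X ⟶ B) (h : B ⟶ A⟦(1 : ℤ)⟧),
    A ∈ H → B ∈ H → Triangle.mk f g h ∈ (distTriang C) → IsZero A ∨ IsZero B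

/-- A heart is finite if it has finitely many simples up to isomorphism and every object
is a finite iterated extension of simple objects. -/
def FiniteHeart (T : TStr C) : Prop :=
  (∃ (n : ℕ) (S : Fin n → C), (∀ i, IsSimpleIn C (heart C T) (S i)) ∧
    ∀ X, IsSimpleIn C (heart C T) X → ∃ i, Nonempty (X ≅ S i)) ∧
  ∀ M ∈ heart C T, ∃ (m : ℕ) (obj : ℕ → C), IsZero (obj 0) ∧ Nonempty (obj m ≅ M) ∧
    ∀ i < m, ∃ (s : C) (f : obj i ⟶ obj (i + 1)) (g : obj (i + 1) ⟶ s)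
      (h : s ⟶ (obj i)⟦(1 : ℤ)⟧),
      IsSimpleIn C (heart C T) s ∧ Triangle.mk f g h ∈ distTriang C

section Biproducts

variable [HasFiniteBiproducts C]

/-- Finite direct sums of copies of an object `S`. -/
def addObj (S : C) : Set C := {M | ∃ n : ℕ, Nonempty (M ≅ ⨁ (fun _ : Fin n => S))}

/-- The simple forward tilt `H^♯_S` of the heart at a rigid simple `S`: the forward tilt
at the torsion pair whose free part consists of finite direct sums of copies of `S`. -/
def simpleSharpSet (T : TStr C) (S : C) : Set C :=
  tiltSharpSet C T (addObj C S) {M | M ∈ heart C T ∧ ∀ f : M ⟶ S, f = 0}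

/-- The simple backward tilt `H^♭_S` of the heart at a rigid simple `S`: the backward
tilt at the torsion pair whose torsion part consists of finite direct sums of copies
of `S`. -/
def simpleFlatSet (T : TStr C) (S : C) : Set C :=
  tiltFlatSet C T {M | M ∈ heart C T ∧ ∀ f : S ⟶ M, f = 0} (addObj C S)

end Biproducts

/-!
With cohomological indexing a bounded t-structure with aisle `P` has `D^{≤ n} = P[-n]`, and the
objects of its heart shifted by `[k]` sit in degree `-k`. The aisle is built from the heart `H` by
extensions and nonnegative shifts, so `P ⊆ P₀[m]` holds as soon as `H ⊆ D₀^{≤ -m}`. Passing to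
right orthogonals, `P₀[m] ⊆ P` says `P^⊥ ⊆ P₀^⊥[m]`, and `P^⊥` is built from `H` by extensions and
negative shifts, so this amounts to `H ⊆ D₀^{≥ -m}`. Both `D₀^{≤ -m}` and `D₀^{≥ -m}` are closed
under extensions, so when `H` has finite length it suffices to test its simple objects; and
whether an object lies in one of them is read off from the degrees of its `H₀`-homology.
-/

section Development

open Triangulated

variable {C}

lemma mem_distTriang_of_iso {X Y Z X' Y' Z' : C} {f : X ⟶ Y} {g : Y ⟶ Z} {h : Z ⟶ X⟦(1 : ℤ)⟧}
    (hT : Triangle.mk f g h ∈ distTriang C) {f' : X' ⟶ Y'} {g' : Y' ⟶ Z'} {h' : Z' ⟶ X'⟦(1 : ℤ)⟧}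
    (e₁ : X' ≅ X) (e₂ : Y' ≅ Y) (e₃ : Z' ≅ Z) (comm₁ : f' ≫ e₂.hom = e₁.hom ≫ f)
    (comm₂ : g' ≫ e₃.hom = e₂.hom ≫ g) (comm₃ : h' ≫ e₁.hom⟦(1 : ℤ)⟧' = e₃.hom ≫ h) :
    Triangle.mk f' g' h' ∈ distTriang C :=
  isomorphic_distinguished _ hT _ (Triangle.isoMk _ _ e₁ e₂ e₃ comm₁ comm₂ comm₃)

section ExtensionClosed

variable (t : TStructure C) (n : ℤ)

instance le_containsZero : (t.le n).ContainsZero :=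
  ⟨0, isZero_zero C, t.le_of_isLE 0 n⟩

instance ge_containsZero : (t.ge n).ContainsZero :=
  ⟨0, isZero_zero C, t.ge_of_isGE 0 n⟩

instance le_isTriangulatedClosed₂ : (t.le n).IsTriangulatedClosed₂ :=
  .mk' fun T hT h₁ h₃ ↦ (t.isLE₂ T hT n ⟨h₁⟩ ⟨h₃⟩).le

instance ge_isTriangulatedClosed₂ : (t.ge n).IsTriangulatedClosed₂ :=
  .mk' fun T hT h₁ h₃ ↦ (t.isGE₂ T hT n ⟨h₁⟩ ⟨h₃⟩).ge

variable {Q : ObjectProperty C} [Q.IsClosedUnderIsomorphisms] [Q.ContainsZero]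
  [Q.IsTriangulatedClosed₂]

lemma prop_of_iterated_extension {n : ℕ} {obj : ℕ → C} (hzero : IsZero (obj 0))
    (hext : ∀ i < n, ∃ (s : C) (f : obj i ⟶ obj (i + 1)) (g : obj (i + 1) ⟶ s)
      (h : s ⟶ (obj i)⟦(1 : ℤ)⟧), Q s ∧ Triangle.mk f g h ∈ distTriang C) :
    Q (obj n) := by
  induction n with
  | zero => exact Q.prop_of_isZero hzero
  | succ n ih =>
    obtain ⟨s, f, g, h, hs, hT⟩ := hext n n.lt_succ_self
    exact Q.ext_of_isTriangulatedClosed₂ _ hT (ih fun i hi ↦ hext i (by lia)) hs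

/-- The heart of `T` has finite length: each of its objects is a finite iterated extension of
simple objects. There may be infinitely many simple objects. -/
def FiniteLengthHeart (T : TStr C) : Prop :=
  ∀ M ∈ heart C T, ∃ (m : ℕ) (obj : ℕ → C), IsZero (obj 0) ∧ Nonempty (obj m ≅ M) ∧
    ∀ i < m, ∃ (s : C) (f : obj i ⟶ obj (i + 1)) (g : obj (i + 1) ⟶ s)
      (h : s ⟶ (obj i)⟦(1 : ℤ)⟧),
      IsSimpleIn C (heart C T) s ∧ Triangle.mk f g h ∈ distTriang C

lemma FiniteLengthHeart.forall_mem_heart_iff {T : TStr C} (hlen : FiniteLengthHeart T) :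
    (∀ M ∈ heart C T, Q M) ↔ ∀ S, IsSimpleIn C (heart C T) S → Q S := by
  refine ⟨fun hQ S hS ↦ hQ S hS.1, fun hQ M hM ↦ ?_⟩
  obtain ⟨m, obj, hzero, ⟨e⟩, hext⟩ := hlen M hM
  refine Q.prop_of_iso e (prop_of_iterated_extension hzero fun i hi ↦ ?_)
  obtain ⟨s, f, g, h, hs, hT⟩ := hext i hi
  exact ⟨s, f, g, h, hQ s hs, hT⟩

end ExtensionClosed

section TruncationTriangle

variable (t : TStructure C) {T : Triangle C} (hT : T ∈ distTriang C) (n m : ℤ)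
  (h₁ : t.IsLE T.obj₁ (n - 1)) (h₃ : t.IsGE T.obj₃ n)
include hT h₁ h₃

lemma isLE_obj₃_of_isLE_obj₂ (h₂ : t.IsLE T.obj₂ m) : t.IsLE T.obj₃ m := by
  have h₁' : t.IsLE (T.obj₁⟦(1 : ℤ)⟧) (n - 2) := t.isLE_shift _ (n - 1) 1 (n - 2)
  have hmax : t.IsLE T.obj₃ (max m (n - 2)) :=
    t.isLE₂ _ (rot_of_distTriang _ hT) _ (t.isLE_of_le T.obj₂ m _)
      (t.isLE_of_le (T.obj₁⟦(1 : ℤ)⟧) (n - 2) _)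
  obtain hm | hm := le_or_gt (n - 2) m
  · exact t.isLE_of_le _ (max m (n - 2)) _
  · exact t.isLE_of_isZero (t.isZero _ (max m (n - 2)) n) _

lemma isLE_obj₁_of_isLE_obj₂ (h₂ : t.IsLE T.obj₂ m) : t.IsLE T.obj₁ m := by
  obtain hm | hm := le_or_gt (n - 1) m
  · exact t.isLE_of_le _ (n - 1) _
  · have := isLE_obj₃_of_isLE_obj₂ t hT n m h₁ h₃ h₂
    have : IsIso T.mor₁ := (T.isZero₃_iff_isIso₁ hT).1 (t.isZero _ m n)
    exact t.isLE_of_iso (asIso T.mor₁).symm m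

lemma isGE_obj₁_of_isGE_obj₂ (h₂ : t.IsGE T.obj₂ m) : t.IsGE T.obj₁ m := by
  have h₃' : t.IsGE (T.obj₃⟦(-1 : ℤ)⟧) (n + 1) := t.isGE_shift _ n (-1) (n + 1)
  have hmin : t.IsGE T.obj₁ (min m (n + 1)) :=
    t.isGE₂ _ (inv_rot_of_distTriang _ hT) _ (t.isGE_of_ge (T.obj₃⟦(-1 : ℤ)⟧) _ (n + 1))
      (t.isGE_of_ge T.obj₂ _ m)
  obtain hm | hm := le_or_gt m (n + 1)
  · exact t.isGE_of_ge _ _ (min m (n + 1))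
  · exact t.isGE_of_isZero (t.isZero _ (n - 1) (min m (n + 1))) _

end TruncationTriangle

namespace TStr

variable (T : TStr C)

lemma mem_of_iso {X Y : C} (e : X ≅ Y) (hX : X ∈ T.P) : Y ∈ T.P :=
  T.summand X Y e.inv e.hom e.inv_hom_id hX

lemma mem_perp_of_iso {X Y : C} (e : X ≅ Y) (hX : X ∈ perp C T.P) : Y ∈ perp C T.P :=
  fun F hF _ ↦ (cancel_mono e.inv).1 ((hX F hF _).trans zero_comp.symm)

/-- The t-structure with aisle `T.P` in the sense of Mathlib, whose cohomological indexing makes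
the objects `≤ n` those of `P[-n]` and the objects `≥ n` those of `P^⊥[1 - n]`. -/
def toTStructure : TStructure C where
  le n := fun X ↦ X⟦n⟧ ∈ T.P
  ge n := fun X ↦ X⟦n - 1⟧ ∈ perp C T.P
  le_isClosedUnderIsomorphisms n :=
    ⟨fun e h ↦ T.mem_of_iso ((shiftFunctor C n).mapIso e) h⟩
  ge_isClosedUnderIsomorphisms n :=
    ⟨fun e h ↦ T.mem_perp_of_iso ((shiftFunctor C (n - 1)).mapIso e) h⟩
  le_shift n a n' h X hX := T.mem_of_iso ((shiftFunctorAdd' C a n' n h).app X) hX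
  ge_shift n a n' h X hX :=
    T.mem_perp_of_iso ((shiftFunctorAdd' C a (n' - 1) (n - 1) (by lia)).app X) hX
  zero' X Y f hX hY :=
    T.mem_perp_of_iso ((shiftFunctorZero' C (1 - 1 : ℤ) (by lia)).app Y) hY X
      (T.mem_of_iso ((shiftFunctorZero C ℤ).app X) hX) f
  le_zero_le X hX :=
    T.mem_of_iso ((shiftFunctorAdd' C (0 : ℤ) 1 1 (by lia)).symm.app X) (T.shift_mem _ hX)
  ge_one_le X hX F hF f := by
    apply (shiftFunctor C (1 : ℤ)).map_injective
    rw [Functor.map_zero]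
    exact T.mem_perp_of_iso ((shiftFunctorAdd' C (0 - 1 : ℤ) 1 (1 - 1) (by lia)).app X) hX _
      (T.shift_mem F hF) _
  exists_triangle_zero_one A := by
    obtain ⟨F, G, f, g, h, hF, hG, hT⟩ := T.exists_triangle A
    exact ⟨F, G, T.mem_of_iso ((shiftFunctorZero C ℤ).symm.app F) hF,
      T.mem_perp_of_iso ((shiftFunctorZero' C (1 - 1 : ℤ) (by lia)).symm.app G) hG, f, g, h, hT⟩

lemma mem_P_iff (X : C) : X ∈ T.P ↔ T.toTStructure.IsLE X 0 := by
  rw [← T.toTStructure.le_iff_isLE]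
  exact ⟨T.mem_of_iso ((shiftFunctorZero C ℤ).symm.app X),
    T.mem_of_iso ((shiftFunctorZero C ℤ).app X)⟩

lemma mem_shiftSet_P_iff (X : C) (m : ℤ) :
    X ∈ shiftSet C T.P m ↔ T.toTStructure.IsLE X (-m) :=
  T.toTStructure.le_iff_isLE X (-m)

lemma mem_heart_iff (X : C) :
    X ∈ heart C T ↔ T.toTStructure.IsLE X 0 ∧ T.toTStructure.IsGE X 0 :=
  and_congr (T.mem_P_iff X) (T.toTStructure.ge_iff_isGE X 0)

lemma exists_isLE (X : C) : ∃ a, T.toTStructure.IsLE X a := by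
  obtain ⟨a, ha⟩ := T.bounded_above X
  exact ⟨a, ⟨ha a le_rfl⟩⟩

lemma exists_isGE (X : C) : ∃ b, T.toTStructure.IsGE X b := by
  obtain ⟨b, hb⟩ := T.bounded_below X
  exact ⟨b, ⟨hb (b - 1) (by lia)⟩⟩

end TStr

namespace HeartFiltration

variable {T : TStr C} {M : C}

section Factors

variable (F : HeartFiltration C T M)

lemma prop_obj {Q : ObjectProperty C} [Q.IsClosedUnderIsomorphisms] [Q.ContainsZero]
    [Q.IsTriangulatedClosed₂] {k : ℕ} (hk : k ≤ F.n)
    (hfactor : ∀ i, 1 ≤ i → i ≤ k → Q ((F.factor i)⟦F.deg i⟧)) : Q (F.obj k) := by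
  refine prop_of_iterated_extension F.zero fun i hi ↦ ?_
  obtain ⟨f, g, h, hT⟩ := F.tri (i + 1) (by lia) (by lia)
  exact ⟨_, f, g, h, hfactor _ (by lia) (by lia), hT⟩

lemma prop {Q : ObjectProperty C} [Q.IsClosedUnderIsomorphisms] [Q.ContainsZero]
    [Q.IsTriangulatedClosed₂]
    (hfactor : ∀ i, 1 ≤ i → i ≤ F.n → Q ((F.factor i)⟦F.deg i⟧)) : Q M :=
  Q.prop_of_iso F.top (F.prop_obj le_rfl hfactor)

variable {i : ℕ}

lemma isLE_factor_shift (hi : 1 ≤ i) (hin : i ≤ F.n) :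
    T.toTStructure.IsLE ((F.factor i)⟦F.deg i⟧) (-F.deg i) :=
  have := ((T.mem_heart_iff _).1 (F.mem i hi hin)).1
  T.toTStructure.isLE_shift _ 0 _ _

lemma isGE_factor_shift (hi : 1 ≤ i) (hin : i ≤ F.n) :
    T.toTStructure.IsGE ((F.factor i)⟦F.deg i⟧) (-F.deg i) :=
  have := ((T.mem_heart_iff _).1 (F.mem i hi hin)).2
  T.toTStructure.isGE_shift _ 0 _ _

lemma isLE_obj (hin : i ≤ F.n) : T.toTStructure.IsLE (F.obj i) (-F.deg i) where
  le := F.prop_obj hin fun j hj hji ↦ by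
    have := F.isLE_factor_shift hj (hji.trans hin)
    have : F.deg i ≤ F.deg j := hji.eq_or_lt.elim (fun h ↦ h ▸ le_rfl)
      fun h ↦ (F.strict j i hj h hin).le
    exact (T.toTStructure.isLE_of_le _ (-F.deg j) _).le

lemma isLE_obj_pred (hi : 1 ≤ i) (hin : i ≤ F.n) :
    T.toTStructure.IsLE (F.obj (i - 1)) (-F.deg i - 1) where
  le := F.prop_obj (by lia) fun j hj hji ↦ by
    have := F.isLE_factor_shift hj (by lia)
    have := F.strict j i hj (by lia) hin
    exact (T.toTStructure.isLE_of_le _ (-F.deg j) _).le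

lemma isLE_obj_of_isLE (hin : i ≤ F.n) {m : ℤ} (hM : T.toTStructure.IsLE M m) :
    T.toTStructure.IsLE (F.obj i) m := by
  induction hin using Nat.decreasingInduction with
  | self => exact T.toTStructure.isLE_of_iso F.top.symm m
  | of_succ k hk ih =>
    obtain ⟨f, g, h, hT⟩ := F.tri (k + 1) (by lia) hk
    exact isLE_obj₁_of_isLE_obj₂ _ hT _ m (F.isLE_obj_pred (by lia) hk)
      (F.isGE_factor_shift (by lia) hk) ih

lemma isGE_obj_of_isGE (hin : i ≤ F.n) {m : ℤ} (hM : T.toTStructure.IsGE M m) :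
    T.toTStructure.IsGE (F.obj i) m := by
  induction hin using Nat.decreasingInduction with
  | self => exact T.toTStructure.isGE_of_iso F.top.symm m
  | of_succ k hk ih =>
    obtain ⟨f, g, h, hT⟩ := F.tri (k + 1) (by lia) hk
    exact isGE_obj₁_of_isGE_obj₂ _ hT _ m (F.isLE_obj_pred (by lia) hk)
      (F.isGE_factor_shift (by lia) hk) ih

lemma isZero_factor_of_isLE_obj (hi : 1 ≤ i) (hin : i ≤ F.n) {m : ℤ}
    (hobj : T.toTStructure.IsLE (F.obj i) m) (hm : F.deg i < -m) : IsZero (F.factor i) := by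
  obtain ⟨f, g, h, hT⟩ := F.tri i hi hin
  have hge := F.isGE_factor_shift hi hin
  have hle : T.toTStructure.IsLE ((F.factor i)⟦F.deg i⟧) m :=
    isLE_obj₃_of_isLE_obj₂ _ hT _ m (F.isLE_obj_pred hi hin) hge hobj
  have hzero : IsZero ((F.factor i)⟦F.deg i⟧) := T.toTStructure.isZero _ m (-F.deg i)
  exact ((shiftFunctor C (-F.deg i)).map_isZero hzero).of_iso
    (shiftShiftNeg (F.factor i) (F.deg i)).symm

lemma isZero_factor_of_isLE (hi : 1 ≤ i) (hin : i ≤ F.n) {m : ℤ}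
    (hM : T.toTStructure.IsLE M m) (hm : F.deg i < -m) :
    IsZero (F.factor i) :=
  F.isZero_factor_of_isLE_obj hi hin (F.isLE_obj_of_isLE hin hM) hm

lemma isZero_factor_of_isGE (hi : 1 ≤ i) (hin : i ≤ F.n) {m : ℤ}
    (hM : T.toTStructure.IsGE M m) (hm : -m < F.deg i) :
    IsZero (F.factor i) := by
  have hle := F.isLE_obj hin
  have hge := F.isGE_obj_of_isGE hin hM
  have hzero : IsZero (F.obj i) := T.toTStructure.isZero _ (-F.deg i) m
  exact F.isZero_factor_of_isLE_obj hi hin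
    (T.toTStructure.isLE_of_isZero hzero (-F.deg i - 1)) (by lia)

end Factors

/-- The filtration of a zero object without any factors. -/
def ofIsZero (T : TStr C) (hM : IsZero M) : HeartFiltration C T M where
  n := 0
  obj _ := M
  deg _ := 0
  factor _ := M
  zero := hM
  top := Iso.refl M
  mem i hi hin := by lia
  strict i j hi hij hj := by lia
  tri i hi hin := by lia

/-- Extends a filtration of `X` by one more factor `Y[d]`, in a degree `d` below all the previous
ones, to a filtration of an extension of `Y[d]` by `X`. -/
def snoc {X Y : C} {d : ℤ} (F : HeartFiltration C T X) (hY : Y ∈ heart C T)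
    (hd : ∀ i, 1 ≤ i → i ≤ F.n → d < F.deg i) {f : X ⟶ M} {g : M ⟶ Y⟦d⟧}
    {h : Y⟦d⟧ ⟶ X⟦(1 : ℤ)⟧} (hT : Triangle.mk f g h ∈ distTriang C) :
    HeartFiltration C T M where
  n := F.n + 1
  obj i := if i ≤ F.n then F.obj i else M
  deg i := if i ≤ F.n then F.deg i else d
  factor i := if i ≤ F.n then F.factor i else Y
  zero := by simpa using F.zero
  top := eqToIso (by simp)
  mem i hi _ := by
    split_ifs with hin
    exacts [F.mem i hi hin, hY]
  strict i j hi hij hj := by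
    split_ifs with hjn hin hin
    exacts [F.strict i j hi hij hjn, by lia, hd i hi hin, by lia]
  tri i hi hi' := by
    by_cases hin : i ≤ F.n
    · rw [if_pos hin, if_pos hin, if_pos hin, if_pos ((i.sub_le 1).trans hin)]
      exact F.tri i hi hin
    · obtain rfl : i = F.n + 1 := by lia
      rw [if_neg hin, if_neg hin, if_neg hin, if_pos (F.n.add_sub_cancel 1).le, Nat.add_sub_cancel]
      exact ⟨F.top.hom ≫ f, g, h ≫ F.top.inv⟦1⟧', mem_distTriang_of_iso hT F.top (Iso.refl M)
        (Iso.refl (Y⟦d⟧)) (by simp) (by simp) (by simp [← Functor.map_comp])⟩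

lemma exists_deg_mem_Icc (T : TStr C) (M : C) (a b : ℤ) (hle : T.toTStructure.IsLE M a)
    (hge : T.toTStructure.IsGE M b) :
    ∃ F : HeartFiltration C T M, ∀ i, 1 ≤ i → i ≤ F.n → F.deg i ∈ Set.Icc (-a) (-b) := by
  obtain ⟨n, hn⟩ : ∃ n : ℕ, a < b + n := ⟨(a - b + 1).toNat, by lia⟩
  induction n generalizing a M with
  | zero =>
    refine ⟨ofIsZero T (T.toTStructure.isZero M a b), fun i hi hin ↦ ?_⟩
    exact absurd (hi.trans hin) (Nat.not_succ_le_zero 0)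
  | succ n ih =>
    obtain hab | hab := lt_or_ge a b
    · exact ih M a hle hge (by lia)
    obtain ⟨X, Y, hX, hY, f, g, h, hT⟩ := T.toTStructure.exists_triangle M (a - 1) a (by lia)
    rw [TStructure.le_iff_isLE] at hX
    rw [TStructure.ge_iff_isGE] at hY
    have hXge : T.toTStructure.IsGE X b := isGE_obj₁_of_isGE_obj₂ _ hT a b hX hY hge
    have hYle : T.toTStructure.IsLE Y a := isLE_obj₃_of_isLE_obj₂ _ hT a a hX hY hle
    have hYheart : Y⟦a⟧ ∈ heart C T := (T.mem_heart_iff _).2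
      ⟨T.toTStructure.isLE_shift Y a a 0, T.toTStructure.isGE_shift Y a a 0⟩
    obtain ⟨F, hF⟩ := ih X (a - 1) hX hXge (by lia)
    obtain ⟨e⟩ : Nonempty (Y⟦a⟧⟦-a⟧ ≅ Y) := ⟨shiftShiftNeg Y a⟩
    have hT' : Triangle.mk f (g ≫ e.inv) (e.hom ≫ h) ∈ distTriang C :=
      mem_distTriang_of_iso hT (Iso.refl X) (Iso.refl M) e (by simp) (by simp) (by simp)
    refine ⟨F.snoc hYheart (fun i hi hin ↦ ?_) hT', fun i hi _ ↦ ?_⟩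
    · have := (hF i hi hin).1
      lia
    · by_cases hiF : i ≤ F.n
      · obtain ⟨hlow, hup⟩ := hF i hi hiF
        simp only [snoc, hiF, if_true, Set.mem_Icc]
        lia
      · simp only [snoc, hiF, if_false, Set.mem_Icc]
        lia

end HeartFiltration

section Homology

variable (T : TStr C) (M : C) (a : ℤ)

lemma exists_heartFiltration : Nonempty (HeartFiltration C T M) := by
  obtain ⟨p, hp⟩ := T.exists_isLE M
  obtain ⟨q, hq⟩ := T.exists_isGE M
  obtain ⟨F, -⟩ := HeartFiltration.exists_deg_mem_Icc T M p q hp hq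
  exact ⟨F⟩

lemma isLE_iff_isZero_factor : T.toTStructure.IsLE M a ↔
    ∀ (F : HeartFiltration C T M) (i : ℕ), 1 ≤ i → i ≤ F.n → F.deg i < -a →
      IsZero (F.factor i) := by
  refine ⟨fun hM F i hi hin ↦ F.isZero_factor_of_isLE hi hin hM, fun hzero ↦ ?_⟩
  obtain ⟨F⟩ := exists_heartFiltration T M
  refine ⟨F.prop fun i hi hin ↦ ?_⟩
  obtain hd | hd := lt_or_ge (F.deg i) (-a)
  · exact ObjectProperty.prop_of_isZero _
      ((shiftFunctor C (F.deg i)).map_isZero (hzero F i hi hin hd))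
  · have := F.isLE_factor_shift hi hin
    exact (T.toTStructure.isLE_of_le _ (-F.deg i) a).le

lemma isGE_iff_isZero_factor : T.toTStructure.IsGE M a ↔
    ∀ (F : HeartFiltration C T M) (i : ℕ), 1 ≤ i → i ≤ F.n → -a < F.deg i →
      IsZero (F.factor i) := by
  refine ⟨fun hM F i hi hin ↦ F.isZero_factor_of_isGE hi hin hM, fun hzero ↦ ?_⟩
  obtain ⟨F⟩ := exists_heartFiltration T M
  refine ⟨F.prop fun i hi hin ↦ ?_⟩
  obtain hd | hd := lt_or_ge (-a) (F.deg i)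
  · exact ObjectProperty.prop_of_isZero _
      ((shiftFunctor C (F.deg i)).map_isZero (hzero F i hi hin hd))
  · have := F.isGE_factor_shift hi hin
    exact (T.toTStructure.isGE_of_ge _ a (-F.deg i)).ge

end Homology

section Comparison

variable (T0 T : TStr C) (m : ℤ)

lemma P_subset_shiftSet_iff :
    T.P ⊆ shiftSet C T0.P m ↔ ∀ M ∈ heart C T, T0.toTStructure.IsLE M (-m) := by
  refine ⟨fun hP M hM ↦ (T0.mem_shiftSet_P_iff M m).1 (hP hM.1), fun hheart X hX ↦ ?_⟩
  obtain ⟨q, hq⟩ := T.exists_isGE X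
  obtain ⟨F, hF⟩ := HeartFiltration.exists_deg_mem_Icc T X 0 q ((T.mem_P_iff X).1 hX) hq
  rw [T0.mem_shiftSet_P_iff]
  refine ⟨F.prop fun i hi hin ↦ ?_⟩
  have hdeg := (hF i hi hin).1
  have := hheart _ (F.mem i hi hin)
  have := T0.toTStructure.isLE_shift (F.factor i) (-m) (F.deg i) (-m - F.deg i)
  exact (T0.toTStructure.isLE_of_le _ (-m - F.deg i) (-m)).le

lemma isGE_of_shiftSet_P_subset (hP : shiftSet C T0.P m ⊆ T.P) {M : C}
    (hM : T.toTStructure.IsGE M 0) : T0.toTStructure.IsGE M (-m) := by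
  rw [T0.toTStructure.isGE_iff_orthogonal (-m - 1) (-m) (by lia)]
  intro Y f hY
  have hshift : Y⟦(-1 : ℤ)⟧ ∈ shiftSet C T0.P m := (T0.mem_shiftSet_P_iff _ m).2
    (T0.toTStructure.isLE_shift Y (-m - 1) (-1) (-m))
  have := (T.mem_P_iff _).1 (hP hshift)
  have := T.toTStructure.isLE_of_shift Y (-1) (-1) 0
  exact T.toTStructure.zero f (-1) 0

lemma shiftSet_subset_P_iff :
    shiftSet C T0.P m ⊆ T.P ↔ ∀ M ∈ heart C T, T0.toTStructure.IsGE M (-m) := by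
  refine ⟨fun hP M hM ↦ isGE_of_shiftSet_P_subset T0 T m hP ((T.mem_heart_iff M).1 hM).2,
    fun hheart X hX ↦ ?_⟩
  rw [T0.mem_shiftSet_P_iff] at hX
  rw [T.mem_P_iff, T.toTStructure.isLE_iff_orthogonal 0 1 (by lia)]
  intro Y f hY
  obtain ⟨p, hp⟩ := T.exists_isLE Y
  obtain ⟨F, hF⟩ := HeartFiltration.exists_deg_mem_Icc T Y p 1 hp hY
  have hYge : T0.toTStructure.IsGE Y (-m + 1) := ⟨F.prop fun i hi hin ↦ by
    have hdeg := (hF i hi hin).2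
    have := hheart _ (F.mem i hi hin)
    have := T0.toTStructure.isGE_shift (F.factor i) (-m) (F.deg i) (-m - F.deg i)
    exact (T0.toTStructure.isGE_of_ge _ (-m + 1) (-m - F.deg i)).ge⟩
  exact T0.toTStructure.zero f (-m) (-m + 1)

end Comparison

theorem statement_11_general (T0 T : TStr C) (hlen : FiniteLengthHeart T) (N : ℤ) :
    (T.P ⊆ shiftSet C T0.P 1 ∧ shiftSet C T0.P (N - 1) ⊆ T.P) ↔
      ∀ S : C, IsSimpleIn C (heart C T) S →
        ∀ (F : HeartFiltration C T0 S) (i : ℕ), 1 ≤ i → i ≤ F.n →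
          (F.deg i ≤ 0 ∨ N ≤ F.deg i) → IsZero (F.factor i) := by
  have hle : T.P ⊆ shiftSet C T0.P 1 ↔
      ∀ S, IsSimpleIn C (heart C T) S → T0.toTStructure.IsLE S (-1) := by
    simpa only [TStructure.le_iff_isLE, P_subset_shiftSet_iff] using
      hlen.forall_mem_heart_iff (Q := T0.toTStructure.le (-1))
  have hge : shiftSet C T0.P (N - 1) ⊆ T.P ↔
      ∀ S, IsSimpleIn C (heart C T) S → T0.toTStructure.IsGE S (-(N - 1)) := by
    simpa only [TStructure.ge_iff_isGE, shiftSet_subset_P_iff] using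
      hlen.forall_mem_heart_iff (Q := T0.toTStructure.ge (-(N - 1)))
  have hdeg (d : ℤ) : d < 1 ↔ d ≤ 0 := by lia
  simp only [hle, hge, isLE_iff_isZero_factor, isGE_iff_isZero_factor, neg_neg,
    Int.sub_one_lt_iff, hdeg, or_imp, forall_and]

end Development

/-- For finite hearts `H0` and `H` and `N ≥ 2`:
`H0[1] ≤ H ≤ H0[N-1]` if and only if for every simple `S` of `H` the homology of `S`
with respect to `H0` vanishes in all degrees `m ≤ 0` and `m ≥ N` (i.e. every factor of a
canonical filtration of `S` with respect to `H0` in such a degree is zero). -/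
theorem statement_11 (T0 T : TStr C) (hfin0 : FiniteHeart C T0)
    (hfin : FiniteHeart C T) (N : ℤ) (hN : 2 ≤ N) :
    (T.P ⊆ shiftSet C T0.P 1 ∧ shiftSet C T0.P (N - 1) ⊆ T.P) ↔
      ∀ S : C, IsSimpleIn C (heart C T) S →
        ∀ (F : HeartFiltration C T0 S) (i : ℕ), 1 ≤ i → i ≤ F.n →
          (F.deg i ≤ 0 ∨ N ≤ F.deg i) → IsZero (F.factor i) :=
  statement_11_general T0 T hfin.2 N

end Paper
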